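/- Let ω = e^{2πi/3}, θ₁ = 2cos(2π/7), θ₂ = θ₁² − 2, θ₃ = θ₂² − 2, and let O_L = ℤ[ω][θ₁] with the automorphism σ determined by σ(θ₁) = θ₂ (acting coefficientwise on ℤ[ω]-combinations of 1, θ₁, θ₁²). For every nonzero β ∈ O_L, the minimum of |det([[x₀, x₁, x₂], [ω·σ(x₂), σ(x₀), σ(x₁)], [ω·σ²(x₁), ω·σ²(x₂), σ²(x₀)]])|² over all triples (x₀, x₁, x₂) ∈ (β·O_L)³ with (x₀, x₁, x₂) ≠ (0, 0, 0) equals |β·σ(β)·σ²(β)|², which equals the absolute norm of the ideal β·O_L. -/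

import Mathlib

noncomputable section

open Complex

/-- `ω = e^{2πi/3}`, the primitive cube root of unity. -/
def om : ℂ := Complex.exp (2 * Real.pi * Complex.I / 3)

/-- `θ₁ = 2cos(2π/7)`. -/
def t1 : ℂ := 2 * Real.cos (2 * Real.pi / 7)

/-- `θ₂ = θ₁² − 2`. -/
def t2 : ℂ := t1 ^ 2 - 2

/-- `θ₃ = θ₂² − 2`. -/
def t3 : ℂ := t2 ^ 2 - 2

/-- The Eisenstein integer `p.1 + p.2·ω` as a complex number. -/
def E (p : ℤ × ℤ) : ℂ := (p.1 : ℂ) + (p.2 : ℂ) * om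

/-- `X a b c ℓ t = a_ℓ + b_ℓ·t + c_ℓ·t²` evaluated at `t ∈ {θ₁, θ₂, θ₃}`. -/
def X (a b c : Fin 3 → ℤ × ℤ) (ℓ : Fin 3) (t : ℂ) : ℂ :=
  E (a ℓ) + E (b ℓ) * t + E (c ℓ) * t ^ 2

/-- The ring of integers `O_L = ℤ[ω][θ₁]` of `L = ℚ(ω,θ₁)`, realized as the subring
of `ℂ` generated by `ω` and `θ₁`. -/
def OL3 : Subring ℂ := Subring.closure {om, t1}
/-!
The code matrix is the matrix of `x₀ + x₁e + x₂e²` in the cyclic algebra over `L/K` with `e³ = ω`,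
so its determinant is a reduced norm. We realize `O_L` abstractly as `A = ℤ[ω][θ]` with
`θ³ + θ² - 2θ - 1 = 0` and `σ(θ) = θ² - 2`. Scaling by `β` multiplies the reduced norm by
`βσ(β)σ²(β)`, and the reduced norm is fixed by `σ`, hence lies in `ℤ[ω]`, where every nonzero
element has modulus at least `1`. It remains to see that it vanishes only at zero. The element
`θ - 2` is the product of the two ramified primes of `A` over `7`; modulo either of them `σ` becomes
trivial and `ω` becomes `γ ∈ {2, 4} ⊆ 𝔽₇`, so the reduced norm becomes
`u³ + γv³ + γ²w³ - 3γuvw`, which is anisotropic because `γ` is not a cube. A zero of the reduced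
norm is therefore divisible by `θ - 2`, and infinite descent shows that it is `0`.

For the index, `n = βσ(β)σ²(β)` lies in `ℤ[ω]`, and
`N_{A/ℤ}(β)³ = N_{A/ℤ}(n) = N_{ℤ[ω]/ℤ}(n)³`, so `|A/βA| = N_{ℤ[ω]/ℤ}(n) = |n|²`.
-/

open scoped Polynomial

/-! ### Reduced norms of cyclic algebras of degree three -/

section CyclicAlgebra

variable {A B : Type*} [CommRing A] [CommRing B]

/-- The norm form `x · σ(x) · σ²(x)` of a cubic ring extension with automorphism `σ`. -/
def cyclicNorm (σ : A →+* A) (x : A) : A := x * σ x * σ (σ x)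

/-- The matrix, acting on row vectors in the left basis `1, e, e²`, of right multiplication by
`x₀ + x₁ e + x₂ e²` in the cyclic algebra of degree `3` with `e³ = γ` and `e a = σ(a) e`. -/
def cyclicMatrix (σ : A →+* A) (γ : A) (x : Fin 3 → A) : Matrix (Fin 3) (Fin 3) A :=
  !![x 0, x 1, x 2;
     γ * σ (x 2), σ (x 0), σ (x 1);
     γ * σ (σ (x 1)), γ * σ (σ (x 2)), σ (σ (x 0))]

/-- The reduced norm of `x₀ + x₁ e + x₂ e²` in the cyclic algebra of `cyclicMatrix`. -/
def reducedNorm (σ : A →+* A) (γ : A) (x : Fin 3 → A) : A := (cyclicMatrix σ γ x).det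

lemma reducedNorm_eq (σ : A →+* A) (γ : A) (x : Fin 3 → A) :
    reducedNorm σ γ x =
      cyclicNorm σ (x 0) + γ * cyclicNorm σ (x 1) + γ ^ 2 * cyclicNorm σ (x 2)
        - γ * (x 0 * σ (x 1) * σ (σ (x 2)) + σ (x 0) * σ (σ (x 1)) * x 2
          + σ (σ (x 0)) * x 1 * σ (x 2)) := by
  simp only [reducedNorm, cyclicMatrix, cyclicNorm, Matrix.det_fin_three, Matrix.of_apply,
    Matrix.cons_val]
  ring

lemma reducedNorm_single_zero (σ : A →+* A) (γ x : A) :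
    reducedNorm σ γ (Pi.single 0 x) = cyclicNorm σ x := by
  simp [reducedNorm_eq, cyclicNorm]

lemma reducedNorm_smul (σ : A →+* A) (γ s : A) (x : Fin 3 → A) :
    reducedNorm σ γ (s • x) = cyclicNorm σ s * reducedNorm σ γ x := by
  simp only [reducedNorm_eq, cyclicNorm, Pi.smul_apply, smul_eq_mul, map_mul]
  ring

lemma map_reducedNorm {σ : A →+* A} {τ : B →+* B} (f : A →+* B) (hf : ∀ x, f (σ x) = τ (f x))
    (γ : A) (x : Fin 3 → A) : f (reducedNorm σ γ x) = reducedNorm τ (f γ) (f ∘ x) := by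
  simp only [reducedNorm_eq, cyclicNorm, map_add, map_sub, map_mul, map_pow, hf,
    Function.comp_apply]

lemma apply_cyclicNorm {σ : A →+* A} (hσ : ∀ x, σ (σ (σ x)) = x) (x : A) :
    σ (cyclicNorm σ x) = cyclicNorm σ x := by
  simp only [cyclicNorm, map_mul, hσ]
  ring

lemma apply_reducedNorm {σ : A →+* A} (hσ : ∀ x, σ (σ (σ x)) = x) {γ : A} (hγ : σ γ = γ)
    (x : Fin 3 → A) : σ (reducedNorm σ γ x) = reducedNorm σ γ x := by
  simp only [reducedNorm_eq, map_add, map_sub, map_mul, map_pow, apply_cyclicNorm hσ, hσ, hγ]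
  ring

lemma eq_zero_of_reducedNorm_eq_zero {σ : A →+* A} {γ π : A}
    (hreg : cyclicNorm σ π ∈ nonZeroDivisors A) (hsep : ∀ x, (∀ n : ℕ, π ^ n ∣ x) → x = 0)
    (hdvd : ∀ x, reducedNorm σ γ x = 0 → ∀ i, π ∣ x i)
    {x : Fin 3 → A} (hx : reducedNorm σ γ x = 0) : x = 0 := by
  suffices hpow : ∀ (n : ℕ) (x : Fin 3 → A), reducedNorm σ γ x = 0 → ∀ i, π ^ n ∣ x i from
    funext fun i => hsep _ fun n => hpow n x hx i
  intro n
  induction n with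
  | zero => simp
  | succ n ih =>
    intro x hx i
    choose y hy using hdvd x hx
    obtain rfl : x = π • y := funext hy
    rw [reducedNorm_smul, mul_left_mem_nonZeroDivisors_eq_zero_iff hreg] at hx
    rw [pow_succ']
    exact mul_dvd_mul_left π (ih y hx i)

end CyclicAlgebra

-- `γ ∈ {2, 4}` is not a cube, so the form is the norm form of the field `𝔽₇(∛γ)`.
lemma eq_zero_of_reducedNorm_id_zmod_seven {γ : ZMod 7} (hγ : γ ^ 2 + γ + 1 = 0)
    {x : Fin 3 → ZMod 7} (hx : reducedNorm (RingHom.id _) γ x = 0) : x = 0 := by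
  have hanisotropic : ∀ γ : ZMod 7, γ ^ 2 + γ + 1 = 0 → ∀ u v w : ZMod 7,
      u ^ 3 + γ * v ^ 3 + γ ^ 2 * w ^ 3 - γ * (3 * (u * v * w)) = 0 → u = 0 ∧ v = 0 ∧ w = 0 := by
    decide
  have hform : x 0 ^ 3 + γ * x 1 ^ 3 + γ ^ 2 * x 2 ^ 3 - γ * (3 * (x 0 * x 1 * x 2)) = 0 := by
    rw [← hx, reducedNorm_eq]
    simp only [cyclicNorm, RingHom.id_apply]
    ring
  obtain ⟨h0, h1, h2⟩ := hanisotropic γ hγ _ _ _ hform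
  ext i
  fin_cases i <;> assumption

/-! ### Rings that are finite over `ℤ` -/

lemma eq_zero_of_forall_intCast_pow_dvd {A : Type*} [CommRing A] [Module.IsTorsionFree ℤ A]
    [Module.Finite ℤ A] {m : ℤ} (hm : ¬IsUnit m) {x : A} (hx : ∀ n : ℕ, (m : A) ^ n ∣ x) :
    x = 0 := by
  have hbot := (Ideal.span {m}).iInf_pow_smul_eq_bot_of_isTorsionFree (M := A)
    (by rwa [Ne, Ideal.span_singleton_eq_top])
  rw [← Submodule.mem_bot ℤ, ← hbot, Submodule.mem_iInf]
  intro n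
  obtain ⟨y, rfl⟩ := hx n
  rw [← Int.cast_pow, ← zsmul_eq_mul]
  exact Submodule.smul_mem_smul (Ideal.pow_mem_pow (Ideal.mem_span_singleton_self m) n) trivial

lemma card_quotient_span_singleton {A : Type*} [CommRing A] [IsDomain A] [Module.Free ℤ A]
    [Module.Finite ℤ A] {x : A} (hx : x ≠ 0) :
    Nat.card (A ⧸ Ideal.span {x}) = (Algebra.norm ℤ x).natAbs :=
  calc Nat.card (A ⧸ Ideal.span {x})
      = Nat.card (A ⧸ (Ideal.span {x}).restrictScalars ℤ) := rfl
    _ = _ := (Submodule.natAbs_det_equiv ((Ideal.span {x}).restrictScalars ℤ)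
          (LinearEquiv.toSpanNonzeroSingleton A A x hx).toAddEquiv).symm
    _ = (Algebra.norm ℤ x).natAbs := by
      rw [Algebra.norm_apply]
      congr 2
      exact LinearMap.ext fun y => mul_comm y x

/-! ### The cubic ring `R[θ]` -/

/-- The polynomial `X³ + X² - 2X - 1`, whose complex roots are `2cos(2π/7)` and its conjugates. -/
def cosPoly (R : Type*) [CommRing R] : R[X] :=
  Polynomial.X ^ 3 + Polynomial.X ^ 2 - 2 * Polynomial.X - 1

/-- The ring `R[θ]` with `θ³ + θ² - 2θ - 1 = 0`: for `R = ℤ` these are the integers of the real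
subfield of the seventh cyclotomic field. -/
abbrev CosRing (R : Type*) [CommRing R] := AdjoinRoot (cosPoly R)

namespace CosRing

variable {R S : Type*} [CommRing R] [CommRing S]

lemma eval₂_cosPoly (f : R →+* S) (t : S) :
    (cosPoly R).eval₂ f t = t ^ 3 + t ^ 2 - 2 * t - 1 := by
  simp [cosPoly]

variable (R) in
lemma cosPoly_eq_toPoly : cosPoly R = (Cubic.mk 1 1 (-2) (-1) : Cubic R).toPoly := by
  simp only [cosPoly, Cubic.toPoly, map_one, map_neg, Polynomial.C_ofNat]
  ring

variable (R) in
lemma monic_cosPoly : (cosPoly R).Monic := by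
  rw [cosPoly_eq_toPoly]
  exact Cubic.monic_of_a_eq_one rfl

variable (R) in
lemma natDegree_cosPoly [Nontrivial R] : (cosPoly R).natDegree = 3 := by
  rw [cosPoly_eq_toPoly]
  exact Cubic.natDegree_of_a_ne_zero one_ne_zero

variable (R) in
/-- The generator `θ` of `R[θ]`, the abstract counterpart of `2cos(2π/7)`. -/
def theta : CosRing R := AdjoinRoot.root (cosPoly R)

variable (R) in
lemma theta_rel : theta R ^ 3 + theta R ^ 2 - 2 * theta R - 1 = 0 := by
  rw [← eval₂_cosPoly (AdjoinRoot.of (cosPoly R))]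
  exact AdjoinRoot.eval₂_root _

/-- The ring homomorphism out of `R[θ]` that extends `f` and sends `θ` to a root `t` of
`X³ + X² - 2X - 1`. -/
def lift (f : R →+* S) (t : S) (ht : t ^ 3 + t ^ 2 - 2 * t - 1 = 0) : CosRing R →+* S :=
  AdjoinRoot.lift f t (by rw [eval₂_cosPoly, ht])

section lift

variable (f : R →+* S) (t : S) (ht : t ^ 3 + t ^ 2 - 2 * t - 1 = 0)

@[simp]
lemma lift_theta : lift f t ht (theta R) = t := AdjoinRoot.lift_root _

@[simp]
lemma lift_of (a : R) : lift f t ht (AdjoinRoot.of _ a) = f a := AdjoinRoot.lift_of _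

end lift

lemma ringHom_ext {f g : CosRing R →+* S}
    (hR : ∀ a, f (AdjoinRoot.of _ a) = g (AdjoinRoot.of _ a))
    (hθ : f (theta R) = g (theta R)) : f = g :=
  AdjoinRoot.ringHom_ext (RingHom.ext hR) hθ

lemma sq_sub_two_rel {t : S} (ht : t ^ 3 + t ^ 2 - 2 * t - 1 = 0) :
    (t ^ 2 - 2) ^ 3 + (t ^ 2 - 2) ^ 2 - 2 * (t ^ 2 - 2) - 1 = 0 := by
  linear_combination (t ^ 3 - t ^ 2 - 2 * t + 1) * ht

variable (R) in
/-- The automorphism `σ` of `R[θ]` over `R` with `σ(θ) = θ² - 2`. -/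
def conj : CosRing R →+* CosRing R :=
  lift (AdjoinRoot.of _) (theta R ^ 2 - 2) (sq_sub_two_rel (theta_rel R))

@[simp]
lemma conj_theta : conj R (theta R) = theta R ^ 2 - 2 := lift_theta ..

@[simp]
lemma conj_of (a : R) : conj R (AdjoinRoot.of _ a) = AdjoinRoot.of _ a := lift_of ..

lemma conj_conj_conj (x : CosRing R) : conj R (conj R (conj R x)) = x := by
  suffices h : ((conj R).comp (conj R)).comp (conj R) = RingHom.id _ from congr($h x)
  refine ringHom_ext (fun a => by simp) ?_
  simp only [RingHom.comp_apply, RingHom.id_apply, conj_theta, map_sub, map_pow, map_ofNat]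
  linear_combination (theta R ^ 5 - theta R ^ 4 - 5 * theta R ^ 3 + 4 * theta R ^ 2
    + 5 * theta R - 2) * theta_rel R

lemma lift_conj (f : R →+* S) {t : S} (ht : t ^ 3 + t ^ 2 - 2 * t - 1 = 0) (x : CosRing R) :
    lift f t ht (conj R x) = lift f (t ^ 2 - 2) (sq_sub_two_rel ht) x := by
  suffices h : (lift f t ht).comp (conj R) = lift f (t ^ 2 - 2) (sq_sub_two_rel ht) from
    congr($h x)
  exact ringHom_ext (fun a => by simp) (by simp [map_ofNat])

/-- `a + bθ + cθ²`. -/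
def ofCoords (a b c : R) : CosRing R :=
  AdjoinRoot.of _ a + AdjoinRoot.of _ b * theta R + AdjoinRoot.of _ c * theta R ^ 2

@[simp]
lemma lift_ofCoords (f : R →+* S) (t : S) (ht : t ^ 3 + t ^ 2 - 2 * t - 1 = 0) (a b c : R) :
    lift f t ht (ofCoords a b c) = f a + f b * t + f c * t ^ 2 := by
  simp [ofCoords]

lemma conj_ofCoords (a b c : R) :
    conj R (ofCoords a b c) = ofCoords (a - 2 * b + 3 * c) (-c) (b - c) := by
  rw [conj, lift_ofCoords]
  simp only [ofCoords, map_add, map_sub, map_neg, map_mul, map_ofNat]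
  linear_combination AdjoinRoot.of _ c * (theta R - 1) * theta_rel R

variable (R) in
/-- The basis `1, θ, θ²` of `R[θ]` over `R`. -/
def basis [Nontrivial R] : Module.Basis (Fin 3) R (CosRing R) :=
  (AdjoinRoot.powerBasis' (monic_cosPoly R)).basis.reindex (finCongr (natDegree_cosPoly R))

lemma basis_apply [Nontrivial R] (i : Fin 3) : basis R i = theta R ^ (i : ℕ) := by
  rw [basis, Module.Basis.reindex_apply, PowerBasis.basis_eq_pow]
  rfl

lemma sum_smul_basis [Nontrivial R] (v : Fin 3 → R) :
    ∑ i, v i • basis R i = ofCoords (v 0) (v 1) (v 2) := by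
  simp [Fin.sum_univ_three, basis_apply, ofCoords, Algebra.smul_def]

lemma exists_eq_ofCoords [Nontrivial R] (x : CosRing R) : ∃ a b c, x = ofCoords a b c :=
  ⟨_, _, _, ((basis R).sum_repr x).symm.trans (sum_smul_basis _)⟩

lemma ofCoords_eq_zero_iff [Nontrivial R] {a b c : R} :
    ofCoords a b c = 0 ↔ a = 0 ∧ b = 0 ∧ c = 0 := by
  refine ⟨fun h => ?_, fun ⟨ha, hb, hc⟩ => by simp [ofCoords, ha, hb, hc]⟩
  have hzero := Fintype.linearIndependent_iff.mp (basis R).linearIndependent ![a, b, c]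
    ((sum_smul_basis _).trans h)
  exact ⟨hzero 0, hzero 1, hzero 2⟩

lemma exists_eq_of_of_conj_eq [Nontrivial R] {x : CosRing R} (hx : conj R x = x) :
    ∃ a, x = AdjoinRoot.of _ a := by
  obtain ⟨a, b, c, rfl⟩ := exists_eq_ofCoords x
  have hsub : ofCoords (-2 * b + 3 * c) (-c - b) (b - c - c) = 0 := by
    rw [← sub_eq_zero.mpr hx, conj_ofCoords]
    simp only [ofCoords, map_add, map_sub, map_neg, map_mul, map_ofNat]
    ring
  obtain ⟨h0, h1, h2⟩ := ofCoords_eq_zero_iff.mp hsub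
  have hc : c = 0 := by linear_combination 2 * h0 - h1 + 3 * h2
  have hb : b = 0 := by linear_combination -h1 - hc
  exact ⟨a, by simp [ofCoords, hb, hc]⟩

lemma exists_cyclicNorm_eq_of [Nontrivial R] (x : CosRing R) :
    ∃ n, cyclicNorm (conj R) x = AdjoinRoot.of _ n :=
  exists_eq_of_of_conj_eq (apply_cyclicNorm conj_conj_conj x)

lemma exists_reducedNorm_eq_of [Nontrivial R] (γ : R) (x : Fin 3 → CosRing R) :
    ∃ n, reducedNorm (conj R) (AdjoinRoot.of _ γ) x = AdjoinRoot.of _ n :=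
  exists_eq_of_of_conj_eq (apply_reducedNorm conj_conj_conj (conj_of γ) x)

lemma theta_sub_two_dvd_ofCoords_sub (a b c : R) :
    theta R - 2 ∣ ofCoords a b c - AdjoinRoot.of _ (a + 2 * b + 4 * c) :=
  ⟨AdjoinRoot.of _ b + AdjoinRoot.of _ c * (theta R + 2), by
    simp only [ofCoords, map_add, map_mul, map_ofNat]; ring⟩

variable (R) in
lemma theta_sub_two_dvd_seven : theta R - 2 ∣ 7 :=
  ⟨-(theta R ^ 2 + 3 * theta R + 4), by linear_combination theta_rel R⟩

variable (R) in
lemma seven_dvd_theta_sub_two_pow : 7 ∣ (theta R - 2) ^ 3 :=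
  ⟨-(theta R - 1) ^ 2, by linear_combination theta_rel R⟩

variable (R) in
lemma cyclicNorm_theta_sub_two : cyclicNorm (conj R) (theta R - 2) = -7 := by
  simp only [cyclicNorm, map_sub, map_pow, map_ofNat, conj_theta]
  linear_combination (theta R ^ 4 - 3 * theta R ^ 3 - 3 * theta R ^ 2 + 14 * theta R - 7) *
    theta_rel R

lemma norm_conj (x : CosRing R) : Algebra.norm ℤ (conj R x) = Algebra.norm ℤ x := by
  have hbij : Function.Bijective (conj R) :=
    Function.bijective_iff_has_inverse.mpr
      ⟨fun y => conj R (conj R y), conj_conj_conj, conj_conj_conj⟩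
  exact Algebra.norm_eq_of_algEquiv (AlgEquiv.ofBijective (conj R).toIntAlgHom hbij) x

instance [Nontrivial R] : Module.Free R (CosRing R) := .of_basis (basis R)

instance [Nontrivial R] : Module.Finite R (CosRing R) := .of_basis (basis R)

instance [Nontrivial R] [Module.Free ℤ R] : Module.Free ℤ (CosRing R) := .trans (S := R)

instance [Nontrivial R] [Module.Finite ℤ R] : Module.Finite ℤ (CosRing R) := .trans R _

variable [Nontrivial R] [Module.Free ℤ R]

variable (R) in
lemma cyclicNorm_theta_sub_two_mem_nonZeroDivisors :
    cyclicNorm (conj R) (theta R - 2) ∈ nonZeroDivisors (CosRing R) := by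
  rw [cyclicNorm_theta_sub_two, mem_nonZeroDivisors_iff_right]
  intro x hx
  have h7 : (-7 : ℤ) • x = 0 := by simpa [mul_comm] using hx
  exact (smul_eq_zero_iff_right (by norm_num)).mp h7

lemma norm_eq_norm_of_cyclicNorm_eq {x : CosRing R} {n : R}
    (h : cyclicNorm (conj R) x = AdjoinRoot.of _ n) :
    Algebra.norm ℤ x = Algebra.norm ℤ n := by
  have hcube : Algebra.norm ℤ x ^ 3 = Algebra.norm ℤ n ^ 3 :=
    calc Algebra.norm ℤ x ^ 3
        = Algebra.norm ℤ (cyclicNorm (conj R) x) := by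
          simp only [cyclicNorm, map_mul, norm_conj]; ring
      _ = Algebra.norm ℤ (Algebra.norm R (algebraMap R (CosRing R) n)) := by
          rw [h, Algebra.norm_norm]; rfl
      _ = Algebra.norm ℤ n ^ 3 := by
          rw [Algebra.norm_algebraMap_of_basis (basis R), Fintype.card_fin, map_pow]
  exact Odd.pow_injective (by decide) hcube

lemma eq_zero_of_forall_theta_sub_two_pow_dvd [Module.Finite ℤ R] {x : CosRing R}
    (hx : ∀ n : ℕ, (theta R - 2) ^ n ∣ x) : x = 0 := by
  refine eq_zero_of_forall_intCast_pow_dvd (m := 7) (by decide) fun n => ?_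
  rw [Int.cast_ofNat]
  refine (pow_dvd_pow_of_dvd (seven_dvd_theta_sub_two_pow R) n).trans ?_
  rw [← pow_mul]
  exact hx _

end CosRing

/-! ### The algebraic relations of `ω` and `θ₁` -/

lemma om_rel : om ^ 2 + om + 1 = 0 := by
  have hprim : IsPrimitiveRoot om 3 := by
    simpa [om] using Complex.isPrimitiveRoot_exp 3 (by norm_num)
  have hsum := hprim.geom_sum_eq_zero (by norm_num)
  simp only [Finset.sum_range_succ, Finset.range_zero, Finset.sum_empty] at hsum
  linear_combination hsum

lemma add_inv_rel_of_isPrimitiveRoot_seven {K : Type*} [Field K] {z : K}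
    (hz : IsPrimitiveRoot z 7) :
    (z + z⁻¹) ^ 3 + (z + z⁻¹) ^ 2 - 2 * (z + z⁻¹) - 1 = 0 := by
  have hsum := hz.geom_sum_eq_zero (by norm_num)
  simp only [Finset.sum_range_succ, Finset.range_zero, Finset.sum_empty] at hsum
  have hne : z ≠ 0 := hz.ne_zero (by norm_num)
  field_simp
  linear_combination hsum

lemma t1_rel : t1 ^ 3 + t1 ^ 2 - 2 * t1 - 1 = 0 := by
  have ht1 : t1 = exp (2 * Real.pi * I / 7) + (exp (2 * Real.pi * I / 7))⁻¹ := by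
    rw [t1, Complex.ofReal_cos, Complex.two_cos, ← Complex.exp_neg]
    push_cast
    ring_nf
  rw [ht1]
  exact add_inv_rel_of_isPrimitiveRoot_seven
    (by simpa using Complex.isPrimitiveRoot_exp 7 (by norm_num))

/-! ### Eisenstein integers -/

/-- The ring `ℤ[ω]` of Eisenstein integers; `QuadraticAlgebra.omega` is `ω`, with `ω² = -1 - ω`. -/
abbrev EisensteinInt := QuadraticAlgebra ℤ (-1) (-1)

namespace EisensteinInt

/-- The ring homomorphism out of `ℤ[ω]` sending `ω` to a root `u` of `X² + X + 1`. -/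
def lift {S : Type*} [CommRing S] (u : S) (hu : u ^ 2 + u + 1 = 0) : EisensteinInt →+* S :=
  (QuadraticAlgebra.lift (R := ℤ) (a := -1) (b := -1)
    ⟨u, by rw [zsmul_one, zsmul_eq_mul]; push_cast; linear_combination hu⟩).toRingHom

lemma lift_apply {S : Type*} [CommRing S] (u : S) (hu : u ^ 2 + u + 1 = 0) (z : EisensteinInt) :
    lift u hu z = z.re + z.im * u := by
  simp [lift]

@[simp]
lemma lift_omega {S : Type*} [CommRing S] (u : S) (hu : u ^ 2 + u + 1 = 0) :
    lift u hu QuadraticAlgebra.omega = u := by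
  simp [lift_apply]

-- `7 = (2 - ω)(3 + ω)`, and `ω ↦ 2` and `ω ↦ 4` are the reductions modulo the two factors.
lemma seven_dvd_of_forall_lift_eq_zero {z : EisensteinInt}
    (hz : ∀ (u : ZMod 7) (hu : u ^ 2 + u + 1 = 0), lift u hu z = 0) : 7 ∣ z := by
  have hzmod : ∀ m n : ZMod 7, m + n * 2 = 0 → m + n * 4 = 0 → m = 0 ∧ n = 0 := by decide
  have h2 := hz 2 (by decide)
  have h4 := hz 4 (by decide)
  rw [lift_apply] at h2 h4
  obtain ⟨hre, him⟩ := hzmod _ _ h2 h4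
  rw [ZMod.intCast_zmod_eq_zero_iff_dvd] at hre him
  exact QuadraticAlgebra.algebraMap_dvd_iff.mpr ⟨hre, him⟩

lemma norm_eq (z : EisensteinInt) : Algebra.norm ℤ z = z.re ^ 2 - z.re * z.im + z.im ^ 2 :=
  calc Algebra.norm ℤ z = QuadraticAlgebra.norm z := by
        rw [← QuadraticAlgebra.det_toLinearMap_eq_norm]; rfl
    _ = z.re ^ 2 - z.re * z.im + z.im ^ 2 := by rw [QuadraticAlgebra.norm_def]; ring

lemma norm_pos {z : EisensteinInt} (hz : z ≠ 0) : 0 < Algebra.norm ℤ z := by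
  rw [norm_eq]
  by_contra! hle
  have him : z.im = 0 := by nlinarith [sq_nonneg (2 * z.re - z.im), sq_nonneg z.im]
  have hre : z.re = 0 := by nlinarith [sq_nonneg (2 * z.im - z.re), sq_nonneg z.re]
  exact hz (QuadraticAlgebra.ext hre him)

lemma normSq_lift {u : ℂ} (hu : u ^ 2 + u + 1 = 0) (z : EisensteinInt) :
    Complex.normSq (lift u hu z) = (Algebra.norm ℤ z : ℝ) := by
  have hcube : u ^ 3 = 1 := by linear_combination (u - 1) * hu
  have hconj_mul : starRingEnd ℂ u * u = 1 := by
    rw [← Complex.normSq_eq_conj_mul_self, Complex.normSq_eq_norm_sq,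
      norm_eq_one_of_pow_eq_one hcube (by decide)]
    simp
  have hconj : starRingEnd ℂ u = u ^ 2 := by
    linear_combination u ^ 2 * hconj_mul - starRingEnd ℂ u * hcube
  apply Complex.ofReal_injective
  rw [Complex.normSq_eq_conj_mul_self, lift_apply, norm_eq]
  simp only [map_add, map_mul, map_intCast, hconj, ofReal_intCast]
  push_cast
  linear_combination (z.im : ℂ) ^ 2 * hcube + (z.re : ℂ) * z.im * hu

lemma one_le_normSq_lift {u : ℂ} (hu : u ^ 2 + u + 1 = 0) {z : EisensteinInt} (hz : z ≠ 0) :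
    1 ≤ Complex.normSq (lift u hu z) := by
  rw [normSq_lift]
  exact_mod_cast norm_pos hz

/-- The Eisenstein integer `p.1 + p.2·ω`, the abstract counterpart of `E p`. -/
def ofPair (p : ℤ × ℤ) : EisensteinInt := ⟨p.1, p.2⟩

lemma ofPair_eq_zero_iff {p : ℤ × ℤ} : ofPair p = 0 ↔ p = 0 := by
  simp [ofPair, QuadraticAlgebra.ext_iff, Prod.ext_iff]

lemma lift_ofPair (p : ℤ × ℤ) : lift om om_rel (ofPair p) = E p := by
  simp [lift_apply, ofPair, E]

end EisensteinInt

/-! ### Anisotropy of the reduced norm -/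

namespace CosRing

lemma theta_sub_two_dvd_of_forall_lift_eq_zero {x : CosRing EisensteinInt}
    (hx : ∀ (u : ZMod 7) (hu : u ^ 2 + u + 1 = 0),
      lift (EisensteinInt.lift u hu) 2 (by decide) x = 0) :
    theta EisensteinInt - 2 ∣ x := by
  obtain ⟨a, b, c, rfl⟩ := exists_eq_ofCoords x
  have hseven : 7 ∣ a + 2 * b + 4 * c := by
    refine EisensteinInt.seven_dvd_of_forall_lift_eq_zero fun u hu => ?_
    rw [← hx u hu, lift_ofCoords]
    simp only [map_add, map_mul, map_ofNat]
    ring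
  have hdvd : theta EisensteinInt - 2 ∣ AdjoinRoot.of _ (a + 2 * b + 4 * c) :=
    (theta_sub_two_dvd_seven _).trans
      (by simpa only [map_ofNat] using map_dvd (AdjoinRoot.of _) hseven)
  exact (dvd_sub_left hdvd).mp (theta_sub_two_dvd_ofCoords_sub a b c)

/-- `ω` as an element of `ℤ[ω][θ]`. -/
def omega : CosRing EisensteinInt := AdjoinRoot.of _ QuadraticAlgebra.omega

-- At `θ ↦ 2` the conjugate `θ² - 2` also maps to `2`, so `σ` is trivial modulo `θ - 2`.
lemma theta_sub_two_dvd_of_reducedNorm_eq_zero {x : Fin 3 → CosRing EisensteinInt}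
    (hx : reducedNorm (conj _) omega x = 0) (i : Fin 3) : theta EisensteinInt - 2 ∣ x i := by
  refine theta_sub_two_dvd_of_forall_lift_eq_zero fun u hu => ?_
  set f := lift (EisensteinInt.lift u hu) 2 (by decide) with hf
  have hfconj : ∀ y, f (conj _ y) = RingHom.id _ (f y) := fun y => lift_conj _ _ y
  have hfomega : f omega = u := by simp [hf, omega]
  have hred : reducedNorm (RingHom.id _) u (f ∘ x) = 0 := by
    rw [← hfomega, ← map_reducedNorm f hfconj, hx, map_zero]
  exact congr_fun (eq_zero_of_reducedNorm_id_zmod_seven hu hred) i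

lemma reducedNorm_eq_zero_iff {x : Fin 3 → CosRing EisensteinInt} :
    reducedNorm (conj _) omega x = 0 ↔ x = 0 := by
  constructor
  · exact eq_zero_of_reducedNorm_eq_zero (cyclicNorm_theta_sub_two_mem_nonZeroDivisors _)
      (fun _ => eq_zero_of_forall_theta_sub_two_pow_dvd)
      fun _ => theta_sub_two_dvd_of_reducedNorm_eq_zero
  · rintro rfl
    simp [reducedNorm_eq, cyclicNorm]

lemma cyclicNorm_eq_zero_iff {x : CosRing EisensteinInt} :
    cyclicNorm (conj _) x = 0 ↔ x = 0 := by
  rw [← reducedNorm_single_zero _ omega, reducedNorm_eq_zero_iff, Pi.single_eq_zero_iff]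

/-! ### The embedding into `ℂ` -/

/-- `p + qθ + rθ²` with Eisenstein coefficients given by their integer coordinates. -/
def ofPairs (p q r : ℤ × ℤ) : CosRing EisensteinInt :=
  ofCoords (EisensteinInt.ofPair p) (EisensteinInt.ofPair q) (EisensteinInt.ofPair r)

lemma ofPairs_eq_zero_iff {p q r : ℤ × ℤ} : ofPairs p q r = 0 ↔ p = 0 ∧ q = 0 ∧ r = 0 := by
  simp only [ofPairs, ofCoords_eq_zero_iff, EisensteinInt.ofPair_eq_zero_iff]

lemma ofPairs_single_zero :
    (fun ℓ => ofPairs ((Pi.single 0 (1, 0) : Fin 3 → ℤ × ℤ) ℓ) 0 0) = Pi.single 0 1 := by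
  have hone : ofPairs (1, 0) 0 0 = 1 := by
    have heis : EisensteinInt.ofPair (1, 0) = 1 := rfl
    have hzero : EisensteinInt.ofPair 0 = 0 := rfl
    simp [ofPairs, ofCoords, heis, hzero]
  ext ℓ
  fin_cases ℓ <;> simp [ofPairs_eq_zero_iff, hone]

/-- The embedding of `ℤ[ω][θ]` into `ℂ` with `ω ↦ e^{2πi/3}` and `θ ↦ 2cos(2π/7)`. -/
def embed : CosRing EisensteinInt →+* ℂ :=
  lift (EisensteinInt.lift om om_rel) t1 t1_rel

lemma embed_of (n : EisensteinInt) :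
    embed (AdjoinRoot.of _ n) = EisensteinInt.lift om om_rel n := lift_of ..

lemma embed_omega : embed omega = om := by
  rw [omega, embed_of, EisensteinInt.lift_omega]

lemma embed_ofPairs (p q r : ℤ × ℤ) :
    embed (ofPairs p q r) = E p + E q * t1 + E r * t1 ^ 2 := by
  rw [embed, ofPairs, lift_ofCoords]
  simp only [EisensteinInt.lift_ofPair]

lemma embed_conj_ofPairs (p q r : ℤ × ℤ) :
    embed (conj _ (ofPairs p q r)) = E p + E q * t2 + E r * t2 ^ 2 := by
  rw [embed, lift_conj, ofPairs, lift_ofCoords]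
  simp only [EisensteinInt.lift_ofPair, t2]

lemma embed_conj_conj_ofPairs (p q r : ℤ × ℤ) :
    embed (conj _ (conj _ (ofPairs p q r))) = E p + E q * t3 + E r * t3 ^ 2 := by
  rw [embed, lift_conj, lift_conj, ofPairs, lift_ofCoords]
  simp only [EisensteinInt.lift_ofPair, t3, t2]

lemma embed_cyclicNorm_ofPairs (p q r : ℤ × ℤ) :
    embed (cyclicNorm (conj _) (ofPairs p q r)) =
      (E p + E q * t1 + E r * t1 ^ 2) * (E p + E q * t2 + E r * t2 ^ 2)
        * (E p + E q * t3 + E r * t3 ^ 2) := by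
  simp only [cyclicNorm, map_mul, embed_ofPairs, embed_conj_ofPairs, embed_conj_conj_ofPairs]

lemma embed_cyclicNorm_mul_reducedNorm (p q r : ℤ × ℤ) (a b c : Fin 3 → ℤ × ℤ) :
    embed (cyclicNorm (conj _) (ofPairs p q r) *
        reducedNorm (conj _) omega fun ℓ => ofPairs (a ℓ) (b ℓ) (c ℓ)) =
      Matrix.det
        !![(E p + E q * t1 + E r * t1 ^ 2) * X a b c 0 t1,
           (E p + E q * t1 + E r * t1 ^ 2) * X a b c 1 t1,
           (E p + E q * t1 + E r * t1 ^ 2) * X a b c 2 t1;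
           om * ((E p + E q * t2 + E r * t2 ^ 2) * X a b c 2 t2),
           (E p + E q * t2 + E r * t2 ^ 2) * X a b c 0 t2,
           (E p + E q * t2 + E r * t2 ^ 2) * X a b c 1 t2;
           om * ((E p + E q * t3 + E r * t3 ^ 2) * X a b c 1 t3),
           om * ((E p + E q * t3 + E r * t3 ^ 2) * X a b c 2 t3),
           (E p + E q * t3 + E r * t3 ^ 2) * X a b c 0 t3] := by
  rw [← reducedNorm_smul, reducedNorm, RingHom.map_det]
  congr 1
  ext i j
  fin_cases i <;> fin_cases j <;>
    simp [cyclicMatrix, X, embed_ofPairs, embed_conj_ofPairs, embed_conj_conj_ofPairs, embed_omega]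

lemma embed_injective : Function.Injective embed := by
  refine (injective_iff_map_eq_zero embed).mpr fun x hx => ?_
  obtain ⟨n, hn⟩ := exists_cyclicNorm_eq_of x
  have hlift : EisensteinInt.lift om om_rel n = 0 := by
    rw [← embed_of, ← hn, cyclicNorm, map_mul, map_mul, hx, zero_mul, zero_mul]
  have hn0 : n = 0 := by
    by_contra hne
    simpa [hlift] using (EisensteinInt.one_le_normSq_lift om_rel hne).trans_lt' zero_lt_one
  rwa [hn0, map_zero, cyclicNorm_eq_zero_iff] at hn

instance : IsDomain (CosRing EisensteinInt) := embed_injective.isDomain embed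

lemma range_embed : embed.range = OL3 := by
  apply le_antisymm
  · have hom : om ∈ OL3 := Subring.subset_closure (by simp)
    have ht1 : t1 ∈ OL3 := Subring.subset_closure (by simp)
    have hE (z : EisensteinInt) : EisensteinInt.lift om om_rel z ∈ OL3 := by
      rw [EisensteinInt.lift_apply]
      exact add_mem (intCast_mem _ _) (mul_mem (intCast_mem _ _) hom)
    rintro _ ⟨x, rfl⟩
    obtain ⟨a, b, c, rfl⟩ := exists_eq_ofCoords x
    rw [embed, lift_ofCoords]
    exact add_mem (add_mem (hE a) (mul_mem (hE b) ht1)) (mul_mem (hE c) (pow_mem ht1 2))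
  · rw [OL3, Subring.closure_le]
    rintro _ (rfl | rfl)
    · exact ⟨_, embed_omega⟩
    · exact ⟨theta _, lift_theta ..⟩

/-- The embedding as an isomorphism of `ℤ[ω][θ]` onto `O_L`. -/
def equivOL3 : CosRing EisensteinInt ≃+* OL3 :=
  (RingEquiv.ofBijective embed.rangeRestrict
    ⟨.of_comp (f := Subtype.val) embed_injective, embed.rangeRestrict_surjective⟩).trans
    (RingEquiv.subringCongr range_embed)

lemma card_quotient_OL3 (x : CosRing EisensteinInt) (hx : embed x ∈ OL3) :
    Nat.card (OL3 ⧸ Ideal.span {(⟨embed x, hx⟩ : OL3)}) =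
      Nat.card (CosRing EisensteinInt ⧸ Ideal.span {x}) := by
  have hmap : Ideal.span {(⟨embed x, hx⟩ : OL3)} =
      (Ideal.span {x}).map (equivOL3 : CosRing EisensteinInt →+* OL3) := by
    rw [Ideal.map_span, Set.image_singleton]
    rfl
  exact (Nat.card_congr (Ideal.quotientEquiv _ _ equivOL3 hmap).toEquiv).symm

lemma normSq_embed_cyclicNorm {x : CosRing EisensteinInt} (hx : x ≠ 0) :
    normSq (embed (cyclicNorm (conj _) x)) =
      Nat.card (CosRing EisensteinInt ⧸ Ideal.span {x}) := by
  obtain ⟨n, hn⟩ := exists_cyclicNorm_eq_of x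
  have hn0 : n ≠ 0 := by
    rintro rfl
    rw [map_zero, cyclicNorm_eq_zero_iff] at hn
    exact hx hn
  have hcard : Nat.card (CosRing EisensteinInt ⧸ Ideal.span {x}) = (Algebra.norm ℤ n).natAbs :=
    (card_quotient_span_singleton hx).trans
      (congrArg Int.natAbs (norm_eq_norm_of_cyclicNorm_eq hn))
  rw [hn, embed_of, EisensteinInt.normSq_lift, hcard, Nat.cast_natAbs,
    abs_of_pos (EisensteinInt.norm_pos hn0)]

lemma one_le_normSq_embed_reducedNorm {x : Fin 3 → CosRing EisensteinInt} (hx : x ≠ 0) :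
    1 ≤ normSq (embed (reducedNorm (conj _) omega x)) := by
  obtain ⟨n, hn⟩ := exists_reducedNorm_eq_of QuadraticAlgebra.omega x
  have hn0 : n ≠ 0 := by
    rintro rfl
    rw [map_zero] at hn
    exact hx (reducedNorm_eq_zero_iff.mp hn)
  rw [omega, hn, embed_of]
  exact EisensteinInt.one_le_normSq_lift om_rel hn0

end CosRing

/-- For a nonzero `β = p + q·θ₁ + r·θ₁² ∈ O_L = ℤ[ω][θ₁]` (with conjugates
`σ^m(β) = p + q·θ_{m+1} + r·θ_{m+1}²`), the minimum of the squared modulus of the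
determinant of the `3×3` perfect-code matrix over triples
`(x₀,x₁,x₂) ∈ (β·O_L)³ \ {(0,0,0)}` equals `|β·σ(β)·σ²(β)|²`, which equals the
absolute norm `N(β·O_L) = |O_L/β·O_L|`. -/
theorem stmt15 (p q r : ℤ × ℤ) (hβ : ¬(p = 0 ∧ q = 0 ∧ r = 0))
    (hmem : E p + E q * t1 + E r * t1 ^ 2 ∈ OL3) :
    IsLeast { v : ℝ | ∃ a b c : Fin 3 → ℤ × ℤ, ¬(∀ ℓ, a ℓ = 0 ∧ b ℓ = 0 ∧ c ℓ = 0) ∧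
      v = Complex.normSq (Matrix.det
        !![(E p + E q * t1 + E r * t1 ^ 2) * X a b c 0 t1,
           (E p + E q * t1 + E r * t1 ^ 2) * X a b c 1 t1,
           (E p + E q * t1 + E r * t1 ^ 2) * X a b c 2 t1;
           om * ((E p + E q * t2 + E r * t2 ^ 2) * X a b c 2 t2),
           (E p + E q * t2 + E r * t2 ^ 2) * X a b c 0 t2,
           (E p + E q * t2 + E r * t2 ^ 2) * X a b c 1 t2;
           om * ((E p + E q * t3 + E r * t3 ^ 2) * X a b c 1 t3),
           om * ((E p + E q * t3 + E r * t3 ^ 2) * X a b c 2 t3),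
           (E p + E q * t3 + E r * t3 ^ 2) * X a b c 0 t3]) }
      (Complex.normSq ((E p + E q * t1 + E r * t1 ^ 2) * (E p + E q * t2 + E r * t2 ^ 2)
        * (E p + E q * t3 + E r * t3 ^ 2))) ∧
    Complex.normSq ((E p + E q * t1 + E r * t1 ^ 2) * (E p + E q * t2 + E r * t2 ^ 2)
        * (E p + E q * t3 + E r * t3 ^ 2))
      = (Nat.card (↥OL3 ⧸ Ideal.span
          {(⟨E p + E q * t1 + E r * t1 ^ 2, hmem⟩ : OL3)}) : ℝ) := by
  simp only [← CosRing.embed_cyclicNorm_mul_reducedNorm, ← CosRing.embed_cyclicNorm_ofPairs,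
    map_mul]
  refine ⟨⟨⟨Pi.single 0 (1, 0), 0, 0, fun h => by simpa using (h 0).1, ?_⟩, ?_⟩, ?_⟩
  · simp only [Pi.zero_apply, CosRing.ofPairs_single_zero]
    simp [reducedNorm_single_zero, cyclicNorm]
  · rintro _ ⟨a, b, c, hne, rfl⟩
    have hx : (fun ℓ => CosRing.ofPairs (a ℓ) (b ℓ) (c ℓ)) ≠ 0 := fun h =>
      hne fun ℓ => CosRing.ofPairs_eq_zero_iff.mp (congr_fun h ℓ)
    exact le_mul_of_one_le_right (normSq_nonneg _) (CosRing.one_le_normSq_embed_reducedNorm hx)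
  · have hβ' : CosRing.ofPairs p q r ≠ 0 := fun h => hβ (CosRing.ofPairs_eq_zero_iff.mp h)
    simp only [← CosRing.embed_ofPairs] at hmem ⊢
    rw [CosRing.normSq_embed_cyclicNorm hβ', CosRing.card_quotient_OL3]
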